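/- Let μ_A, μ_B, μ_C ∈ ℝ. The function F on ℝ¹² = ℂ⁴ × ℂ × ℂ (coordinates ζₖ = xₖ + i·yₖ, k = 1,…,6) given by F = μ_A·arg(√(ζ₁² + ζ₂² + ζ₃² + ζ₄²)) + μ_B·arg(ζ₅) + μ_C·arg(ζ₆), i.e. F = (μ_A/2)·arctan(2(x₁y₁+⋯+x₄y₄)/((x₁²−y₁²)+⋯+(x₄²−y₄²))) + μ_B·arctan(y₅/x₅) + μ_C·arctan(y₆/x₆), is harmonic and infinity-harmonic on the open set where (x₁²+⋯+x₄²) − (y₁²+⋯+y₄²) ≠ 0, x₅ ≠ 0 and x₆ ≠ 0, and hence satisfies the minimal hypersurface equation (1 + ‖∇F‖²)·ΔF − Δ_∞F = 0; thus its (multi-valued) graph z = F is minimal in ℝ¹³. -/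

import Mathlib

/-!
The identity `Δ_∞F = ½⟨∇F, ∇‖∇F‖²⟩` makes the infinity-Laplacian additive, like the Laplacian, on
functions of disjoint sets of variables: their gradients are orthogonal and `‖∇F‖²` is the sum of
functions of the separate sets.

Each block of `F` is the angle of a harmonic, horizontally conformal map `q = a + ib`. Such an angle
is harmonic, and `‖∇ arg q‖² = ‖∇a‖² / |q|²`. As `∇ arg q` is orthogonal to `∇|q|²`, the angle is
infinity-harmonic as soon as `‖∇a‖²` is stationary along `∇ arg q`, that is, along `a∇b - b∇a`. For
`q = ζ` we have `‖∇a‖² = 1`. For `q = Σ ζₖ²` we have `‖∇a‖² = 4 Σ |ζₖ|²`, whose gradient is radial;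
by Euler's identity the radial derivatives of `a` and `b` are proportional to `a` and `b`, with the
same factor, so `a∇b - b∇a` is orthogonal to it.
-/

noncomputable section

variable {ι : Type*} [Fintype ι] [DecidableEq ι]

/-- The `i`-th partial derivative `∂F/∂zᵢ` of `F : ℝ^ι → ℝ` at `x`. -/
def pd (F : EuclideanSpace ℝ ι → ℝ) (x : EuclideanSpace ℝ ι) (i : ι) : ℝ :=
  fderiv ℝ F x (EuclideanSpace.single i 1)

/-- The Laplacian `ΔF = Σᵢ ∂²F/∂zᵢ²` at `x`. -/
def lap (F : EuclideanSpace ℝ ι → ℝ) (x : EuclideanSpace ℝ ι) : ℝ :=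
  ∑ i, fderiv ℝ (fun y => pd F y i) x (EuclideanSpace.single i 1)

/-- The infinity-Laplacian `Δ_∞F = Σ_{i,j} (∂F/∂zᵢ)(∂F/∂zⱼ)(∂²F/∂zᵢ∂zⱼ)` at `x`. -/
def infLap (F : EuclideanSpace ℝ ι → ℝ) (x : EuclideanSpace ℝ ι) : ℝ :=
  ∑ i, ∑ j, pd F x i * pd F x j * fderiv ℝ (fun y => pd F y i) x (EuclideanSpace.single j 1)

/-- The squared norm `‖∇F‖²` of the gradient of `F` at `x`. -/
def gradSq (F : EuclideanSpace ℝ ι → ℝ) (x : EuclideanSpace ℝ ι) : ℝ :=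
  ∑ i, (pd F x i) ^ 2

/-- The superposed helicoid height function on `ℝ¹² = ℂ⁴ × ℂ × ℂ`: coordinates
`xₖ = z (inl (inl k))`, `yₖ = z (inl (inr k))` for `k = 1,…,4`, and
`x₅,x₆ = z (inr (inl 0)), z (inr (inl 1))`, `y₅,y₆ = z (inr (inr 0)), z (inr (inr 1))`. -/
def F12 (μA μB μC : ℝ)
    (z : EuclideanSpace ℝ ((Fin 4 ⊕ Fin 4) ⊕ (Fin 2 ⊕ Fin 2))) : ℝ :=
  (μA / 2) * Real.arctan
      ((2 * ∑ k : Fin 4, z (Sum.inl (Sum.inl k)) * z (Sum.inl (Sum.inr k))) /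
        (∑ k : Fin 4, ((z (Sum.inl (Sum.inl k))) ^ 2 - (z (Sum.inl (Sum.inr k))) ^ 2)))
    + μB * Real.arctan (z (Sum.inr (Sum.inr 0)) / z (Sum.inr (Sum.inl 0)))
    + μC * Real.arctan (z (Sum.inr (Sum.inr 1)) / z (Sum.inr (Sum.inl 1)))

open scoped Topology Function

lemma eventually_differentiableAt_of_contDiffAt {𝕜 E F : Type*} [NontriviallyNormedField 𝕜]
    [NormedAddCommGroup E] [NormedSpace 𝕜 E] [NormedAddCommGroup F] [NormedSpace 𝕜 F]
    {f : E → F} {x : E} (hf : ContDiffAt 𝕜 1 f x) : ∀ᶠ y in 𝓝 x, DifferentiableAt 𝕜 f y :=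
  (hf.eventually (by simp)).mono fun _ hy => hy.differentiableAt one_ne_zero

section PartialDerivatives

variable {F G : EuclideanSpace ℝ ι → ℝ} {x : EuclideanSpace ℝ ι}

omit [Fintype ι] in
lemma eventuallyEq_pd (h : F =ᶠ[𝓝 x] G) (i : ι) :
    (fun y => pd F y i) =ᶠ[𝓝 x] fun y => pd G y i :=
  h.fderiv.mono fun _ hy => DFunLike.congr_fun hy (EuclideanSpace.single i 1)

lemma differentiableAt_pd (hF : ContDiffAt ℝ 2 F x) (i : ι) :
    DifferentiableAt ℝ (fun y => pd F y i) x :=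
  ((hF.fderiv_right (m := 1) (by norm_num)).differentiableAt one_ne_zero).clm_apply
    (differentiableAt_const _)

lemma pd_add (hF : DifferentiableAt ℝ F x) (hG : DifferentiableAt ℝ G x) (i : ι) :
    pd (fun y => F y + G y) x i = pd F x i + pd G x i := by
  simp [pd, fderiv_fun_add hF hG]

lemma pd_sub (hF : DifferentiableAt ℝ F x) (hG : DifferentiableAt ℝ G x) (i : ι) :
    pd (fun y => F y - G y) x i = pd F x i - pd G x i := by
  simp [pd, fderiv_fun_sub hF hG]

lemma pd_sum {σ : Type*} [Fintype σ] {f : σ → EuclideanSpace ℝ ι → ℝ}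
    (hf : ∀ s, DifferentiableAt ℝ (f s) x) (i : ι) :
    pd (fun y => ∑ s, f s y) x i = ∑ s, pd (f s) x i := by
  simp [pd, fderiv_fun_sum fun s _ => hf s]

lemma pd_const_mul (c : ℝ) (F : EuclideanSpace ℝ ι → ℝ) (x : EuclideanSpace ℝ ι) (i : ι) :
    pd (fun y => c * F y) x i = c * pd F x i :=
  DFunLike.congr_fun (congrFun (fderiv_const_smul_field (f := F) c) x) (EuclideanSpace.single i 1)

lemma pd_mul (hF : DifferentiableAt ℝ F x) (hG : DifferentiableAt ℝ G x) (i : ι) :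
    pd (fun y => F y * G y) x i = F x * pd G x i + G x * pd F x i := by
  simp [pd, fderiv_fun_mul hF hG]

lemma pd_sq (hF : DifferentiableAt ℝ F x) (i : ι) :
    pd (fun y => F y ^ 2) x i = 2 * F x * pd F x i := by
  simp [pd, fderiv_fun_pow 2 hF]

lemma pd_inv (hF : DifferentiableAt ℝ F x) (hx : F x ≠ 0) (i : ι) :
    pd (fun y => (F y)⁻¹) x i = -pd F x i / F x ^ 2 := by
  have h : HasFDerivAt (fun y => (F y)⁻¹) (-(F x ^ 2)⁻¹ • fderiv ℝ F x) x :=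
    (hasDerivAt_inv hx).comp_hasFDerivAt x hF.hasFDerivAt
  rw [pd, h.fderiv, pd, smul_apply, smul_eq_mul]
  ring

lemma pd_div (hF : DifferentiableAt ℝ F x) (hG : DifferentiableAt ℝ G x) (hx : G x ≠ 0) (i : ι) :
    pd (fun y => F y / G y) x i = (G x * pd F x i - F x * pd G x i) / G x ^ 2 := by
  simp only [div_eq_mul_inv (F _)]
  rw [pd_mul hF (hG.fun_inv hx), pd_inv hG hx]
  field_simp
  ring

lemma pd_arctan (hF : DifferentiableAt ℝ F x) (i : ι) :
    pd (fun y => Real.arctan (F y)) x i = pd F x i / (1 + F x ^ 2) := by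
  simp [pd, fderiv_arctan hF, div_eq_inv_mul]

omit [Fintype ι] in
lemma pd_const (c : ℝ) (x : EuclideanSpace ℝ ι) (i : ι) : pd (fun _ => c) x i = 0 := by
  simp [pd]

lemma pd_coord (x : EuclideanSpace ℝ ι) (j i : ι) :
    pd (fun y => y j) x i = if j = i then 1 else 0 := by
  have hproj : fderiv ℝ (fun y : EuclideanSpace ℝ ι => y j) x = EuclideanSpace.proj j :=
    (EuclideanSpace.proj j : EuclideanSpace ℝ ι →L[ℝ] ℝ).fderiv
  simp [pd, hproj]

lemma lap_eq_sum_pd (F : EuclideanSpace ℝ ι → ℝ) (x : EuclideanSpace ℝ ι) :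
    lap F x = ∑ i, pd (fun y => pd F y i) x i :=
  rfl

lemma infLap_eq_sum_pd (F : EuclideanSpace ℝ ι → ℝ) (x : EuclideanSpace ℝ ι) :
    infLap F x = ∑ i, ∑ j, pd F x i * pd F x j * pd (fun y => pd F y i) x j :=
  rfl

end PartialDerivatives

section GradientPairing

/-- The pairing `⟨∇F, ∇G⟩` of the gradients of `F` and `G` at `x`, so that
`gradSq F = gradDot F F`. -/
def gradDot (F G : EuclideanSpace ℝ ι → ℝ) (x : EuclideanSpace ℝ ι) : ℝ :=
  ∑ i, pd F x i * pd G x i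

variable {F G H : EuclideanSpace ℝ ι → ℝ} {x : EuclideanSpace ℝ ι}

lemma gradSq_eq_gradDot (F : EuclideanSpace ℝ ι → ℝ) (x : EuclideanSpace ℝ ι) :
    gradSq F x = gradDot F F x := by
  simp only [gradSq, gradDot, sq]

lemma gradDot_comm (F G : EuclideanSpace ℝ ι → ℝ) (x : EuclideanSpace ℝ ι) :
    gradDot F G x = gradDot G F x := by
  simp only [gradDot, mul_comm]

lemma gradDot_congr_right (h : G =ᶠ[𝓝 x] H) : gradDot F G x = gradDot F H x := by
  simp only [gradDot, (eventuallyEq_pd h _).eq_of_nhds]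

lemma gradDot_sum_left {σ : Type*} [Fintype σ] {f : σ → EuclideanSpace ℝ ι → ℝ}
    (hf : ∀ s, DifferentiableAt ℝ (f s) x) (G : EuclideanSpace ℝ ι → ℝ) :
    gradDot (fun y => ∑ s, f s y) G x = ∑ s, gradDot (f s) G x := by
  simp only [gradDot, pd_sum hf, Finset.sum_mul]
  exact Finset.sum_comm

lemma gradDot_sum_right {σ : Type*} [Fintype σ] {f : σ → EuclideanSpace ℝ ι → ℝ}
    (F : EuclideanSpace ℝ ι → ℝ) (hf : ∀ s, DifferentiableAt ℝ (f s) x) :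
    gradDot F (fun y => ∑ s, f s y) x = ∑ s, gradDot F (f s) x := by
  simp only [gradDot_comm F, gradDot_sum_left hf]

lemma gradDot_const_mul_right (c : ℝ) (F G : EuclideanSpace ℝ ι → ℝ) (x : EuclideanSpace ℝ ι) :
    gradDot F (fun y => c * G y) x = c * gradDot F G x := by
  simp only [gradDot, pd_const_mul, Finset.mul_sum, mul_left_comm]

lemma gradDot_coord_right (F : EuclideanSpace ℝ ι → ℝ) (j : ι) (x : EuclideanSpace ℝ ι) :
    gradDot F (fun y => y j) x = pd F x j := by
  simp [gradDot, pd_coord]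

lemma gradDot_sq_right (hG : DifferentiableAt ℝ G x) :
    gradDot F (fun y => G y ^ 2) x = 2 * G x * gradDot F G x := by
  simp only [gradDot, pd_sq hG, Finset.mul_sum]
  exact Finset.sum_congr rfl fun i _ => by ring

lemma gradDot_add_right (hG : DifferentiableAt ℝ G x) (hH : DifferentiableAt ℝ H x) :
    gradDot F (fun y => G y + H y) x = gradDot F G x + gradDot F H x := by
  simp only [gradDot, pd_add hG hH, mul_add, Finset.sum_add_distrib]

lemma gradDot_div_right (hG : DifferentiableAt ℝ G x) (hH : DifferentiableAt ℝ H x)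
    (hx : H x ≠ 0) :
    gradDot F (fun y => G y / H y) x
      = (H x * gradDot F G x - G x * gradDot F H x) / H x ^ 2 := by
  simp only [gradDot, pd_div hG hH hx, Finset.mul_sum, ← Finset.sum_sub_distrib, Finset.sum_div]
  exact Finset.sum_congr rfl fun i _ => by ring

lemma differentiableAt_gradSq (hF : ContDiffAt ℝ 2 F x) : DifferentiableAt ℝ (gradSq F) x :=
  DifferentiableAt.fun_sum fun i _ => (differentiableAt_pd hF i).pow 2

lemma infLap_eq_half_gradDot_gradSq (hF : ContDiffAt ℝ 2 F x) :
    infLap F x = gradDot F (gradSq F) x / 2 := by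
  have hpd (j : ι) :
      pd (gradSq F) x j = ∑ i, 2 * pd F x i * pd (fun y => pd F y i) x j := by
    unfold gradSq
    rw [pd_sum fun i => (differentiableAt_pd hF i).fun_pow 2]
    exact Finset.sum_congr rfl fun i _ => pd_sq (differentiableAt_pd hF i) j
  simp only [infLap_eq_sum_pd, gradDot, hpd, Finset.mul_sum, Finset.sum_div]
  rw [Finset.sum_comm]
  exact Finset.sum_congr rfl fun j _ => Finset.sum_congr rfl fun i _ => by ring

lemma lap_const_mul (c : ℝ) (F : EuclideanSpace ℝ ι → ℝ) (x : EuclideanSpace ℝ ι) :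
    lap (fun y => c * F y) x = c * lap F x := by
  simp only [lap_eq_sum_pd, pd_const_mul, Finset.mul_sum]

lemma infLap_const_mul (c : ℝ) (F : EuclideanSpace ℝ ι → ℝ) (x : EuclideanSpace ℝ ι) :
    infLap (fun y => c * F y) x = c ^ 3 * infLap F x := by
  simp only [infLap_eq_sum_pd, pd_const_mul, Finset.mul_sum]
  exact Finset.sum_congr rfl fun i _ => Finset.sum_congr rfl fun j _ => by ring

end GradientPairing

section Superposition

variable {F G : EuclideanSpace ℝ ι → ℝ} {S T : Set ι} {x : EuclideanSpace ℝ ι}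

lemma pd_eq_zero_of_dependsOn (hF : DependsOn (F ∘ WithLp.toLp 2) S) {i : ι} (hi : i ∉ S)
    (x : EuclideanSpace ℝ ι) : pd F x i = 0 := by
  by_cases hd : DifferentiableAt ℝ F x
  · have hconst (t : ℝ) : F (x + t • EuclideanSpace.single i 1) = F x :=
      hF fun j hj => by simp [ne_of_mem_of_not_mem hj hi]
    rw [pd, ← hd.lineDeriv_eq_fderiv, lineDeriv]
    simp only [hconst, deriv_const]
  · simp [pd, fderiv_zero_of_not_differentiableAt hd]

lemma dependsOn_pd (hF : DependsOn (F ∘ WithLp.toLp 2) S) (i : ι) :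
    DependsOn ((fun y => pd F y i) ∘ WithLp.toLp 2) S := by
  intro u v huv
  -- `F` is invariant under the translation taking `u` to `v`.
  have htranslate : (fun y => F (y + WithLp.toLp 2 (v - u))) = F :=
    funext fun y => hF fun j hj => by simp [huv j hj]
  simp only [Function.comp_apply, pd]
  conv_lhs => rw [← htranslate]
  rw [fderiv_comp_add_right, ← WithLp.toLp_add, add_sub_cancel]

lemma dependsOn_gradSq (hF : DependsOn (F ∘ WithLp.toLp 2) S) :
    DependsOn (gradSq F ∘ WithLp.toLp 2) S :=
  fun _ _ huv => Finset.sum_congr rfl fun i _ => congrArg (· ^ 2) (dependsOn_pd hF i huv)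

lemma gradDot_eq_zero_of_dependsOn (hF : DependsOn (F ∘ WithLp.toLp 2) S)
    (hG : DependsOn (G ∘ WithLp.toLp 2) T) (hST : Disjoint S T) (x : EuclideanSpace ℝ ι) :
    gradDot F G x = 0 := by
  refine Finset.sum_eq_zero fun i _ => ?_
  by_cases hi : i ∈ S
  · rw [pd_eq_zero_of_dependsOn hG (hST.notMem_of_mem_left hi), mul_zero]
  · rw [pd_eq_zero_of_dependsOn hF hi, zero_mul]

variable {σ : Type*} [Fintype σ] {f : σ → EuclideanSpace ℝ ι → ℝ}

lemma lap_sum (hf : ∀ s, ContDiffAt ℝ 2 (f s) x) :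
    lap (fun y => ∑ s, f s y) x = ∑ s, lap (f s) x := by
  have hpd (i : ι) : (fun y => pd (fun y => ∑ s, f s y) y i) =ᶠ[𝓝 x] fun y => ∑ s, pd (f s) y i :=
    (Filter.eventually_all.2 fun s => eventually_differentiableAt_of_contDiffAt
      ((hf s).of_le one_le_two)).mono fun _ hy => pd_sum hy i
  simp only [lap_eq_sum_pd, fun i => (eventuallyEq_pd (hpd i) i).eq_of_nhds,
    fun i => pd_sum (fun s => differentiableAt_pd (hf s) i) i]
  exact Finset.sum_comm

variable {S : σ → Set ι}

lemma gradSq_sum_of_pairwise_disjoint (hdiff : ∀ s, DifferentiableAt ℝ (f s) x)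
    (hdep : ∀ s, DependsOn (f s ∘ WithLp.toLp 2) (S s)) (hS : Pairwise (Disjoint on S)) :
    gradSq (fun y => ∑ s, f s y) x = ∑ s, gradSq (f s) x := by
  simp only [gradSq_eq_gradDot, gradDot_sum_left hdiff, gradDot_sum_right _ hdiff]
  exact Finset.sum_congr rfl fun s _ => Fintype.sum_eq_single s fun t hts =>
    gradDot_eq_zero_of_dependsOn (hdep s) (hdep t) (hS hts.symm) x

lemma infLap_sum_of_pairwise_disjoint (hf : ∀ s, ContDiffAt ℝ 2 (f s) x)
    (hdep : ∀ s, DependsOn (f s ∘ WithLp.toLp 2) (S s)) (hS : Pairwise (Disjoint on S)) :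
    infLap (fun y => ∑ s, f s y) x = ∑ s, infLap (f s) x := by
  have hdiff : ∀ᶠ y in 𝓝 x, ∀ s, DifferentiableAt ℝ (f s) y := Filter.eventually_all.2 fun s =>
    eventually_differentiableAt_of_contDiffAt ((hf s).of_le one_le_two)
  have hgradSq : gradSq (fun y => ∑ s, f s y) =ᶠ[𝓝 x] fun y => ∑ s, gradSq (f s) y :=
    hdiff.mono fun _ hy => gradSq_sum_of_pairwise_disjoint hy hdep hS
  rw [infLap_eq_half_gradDot_gradSq (ContDiffAt.sum fun s _ => hf s),
    gradDot_congr_right hgradSq, gradDot_sum_left hdiff.self_of_nhds, Finset.sum_div]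
  refine Finset.sum_congr rfl fun s _ => ?_
  rw [infLap_eq_half_gradDot_gradSq (hf s),
    gradDot_sum_right _ fun t => differentiableAt_gradSq (hf t),
    Fintype.sum_eq_single s fun t hts => gradDot_eq_zero_of_dependsOn (hdep s)
      (dependsOn_gradSq (hdep t)) (hS hts.symm) x]

end Superposition

section Angle

/-- The function `arg (a + ib)`, up to a locally constant term, for `a ≠ 0`: division by `a = 0`
gives the junk value `0`. -/
def polarAngle {E : Type*} (a b : E → ℝ) (y : E) : ℝ :=
  Real.arctan (b y / a y)

section NormedSpace

variable {E : Type*} [NormedAddCommGroup E] [NormedSpace ℝ E] {a b : E → ℝ} {x : E}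

lemma contDiffAt_polarAngle {n : ℕ∞} (ha : ContDiffAt ℝ n a x) (hb : ContDiffAt ℝ n b x)
    (hx : a x ≠ 0) : ContDiffAt ℝ n (polarAngle a b) x :=
  (hb.div ha hx).arctan

lemma eventually_differentiableAt_and_ne_zero (ha : ContDiffAt ℝ 1 a x) (hb : ContDiffAt ℝ 1 b x)
    (hx : a x ≠ 0) :
    ∀ᶠ y in 𝓝 x, DifferentiableAt ℝ a y ∧ DifferentiableAt ℝ b y ∧ a y ≠ 0 :=
  (eventually_differentiableAt_of_contDiffAt ha).and
    ((eventually_differentiableAt_of_contDiffAt hb).and (ha.continuousAt.eventually_ne hx))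

end NormedSpace

/-- Horizontal (weak) conformality near `x` of `a + ib : ℝ^ι → ℂ`; together with harmonicity of `a`
and `b` it makes `a + ib` a harmonic morphism. -/
structure IsHorizontallyConformalAt (a b : EuclideanSpace ℝ ι → ℝ) (x : EuclideanSpace ℝ ι) :
    Prop where
  gradSq_eq : gradSq b =ᶠ[𝓝 x] gradSq a
  gradDot_eq_zero : gradDot a b =ᶠ[𝓝 x] 0

variable {a b : EuclideanSpace ℝ ι → ℝ} {x : EuclideanSpace ℝ ι}

lemma pd_polarAngle (ha : DifferentiableAt ℝ a x) (hb : DifferentiableAt ℝ b x) (hx : a x ≠ 0)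
    (i : ι) :
    pd (polarAngle a b) x i = (a x * pd b x i - b x * pd a x i) / (a x ^ 2 + b x ^ 2) := by
  have hr : a x ^ 2 + b x ^ 2 ≠ 0 := by positivity
  unfold polarAngle
  have hdiv : DifferentiableAt ℝ (fun y => b y / a y) x := by
    simpa only [div_eq_mul_inv] using hb.fun_mul (ha.fun_inv hx)
  rw [pd_arctan hdiv, pd_div hb ha hx]
  field_simp

lemma gradDot_polarAngle_left (ha : DifferentiableAt ℝ a x) (hb : DifferentiableAt ℝ b x)
    (hx : a x ≠ 0) (H : EuclideanSpace ℝ ι → ℝ) :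
    gradDot (polarAngle a b) H x
      = (a x * gradDot b H x - b x * gradDot a H x) / (a x ^ 2 + b x ^ 2) := by
  simp only [gradDot, pd_polarAngle ha hb hx, Finset.mul_sum, ← Finset.sum_sub_distrib,
    Finset.sum_div]
  exact Finset.sum_congr rfl fun i _ => by ring

lemma lap_polarAngle (ha : ContDiffAt ℝ 2 a x) (hb : ContDiffAt ℝ 2 b x) (hx : a x ≠ 0)
    (hconf : IsHorizontallyConformalAt a b x) (hlap_a : lap a x = 0) (hlap_b : lap b x = 0) :
    lap (polarAngle a b) x = 0 := by
  have hda := ha.differentiableAt two_ne_zero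
  have hdb := hb.differentiableAt two_ne_zero
  have hr : a x ^ 2 + b x ^ 2 ≠ 0 := by positivity
  have hpd (i : ι) : (fun y => pd (polarAngle a b) y i) =ᶠ[𝓝 x]
      fun y => (a y * pd b y i - b y * pd a y i) / (a y ^ 2 + b y ^ 2) :=
    (eventually_differentiableAt_and_ne_zero (ha.of_le one_le_two) (hb.of_le one_le_two) hx).mono
      fun _ ⟨hya, hyb, hy⟩ => pd_polarAngle hya hyb hy i
  have hpd_pd (i : ι) : pd (fun y => pd (polarAngle a b) y i) x i =
      (a x * pd (fun y => pd b y i) x i - b x * pd (fun y => pd a y i) x i) / (a x ^ 2 + b x ^ 2)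
        - 2 * ((a x ^ 2 - b x ^ 2) * (pd a x i * pd b x i)
          + a x * b x * (pd b x i ^ 2 - pd a x i ^ 2)) / (a x ^ 2 + b x ^ 2) ^ 2 := by
    have hda' := differentiableAt_pd ha i
    have hdb' := differentiableAt_pd hb i
    rw [(eventuallyEq_pd (hpd i) i).eq_of_nhds,
      pd_div ((hda.fun_mul hdb').fun_sub (hdb.fun_mul hda'))
        ((hda.fun_pow 2).fun_add (hdb.fun_pow 2)) hr,
      pd_sub (hda.fun_mul hdb') (hdb.fun_mul hda'), pd_mul hda hdb', pd_mul hdb hda',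
      pd_add (hda.fun_pow 2) (hdb.fun_pow 2), pd_sq hda, pd_sq hdb]
    field_simp
    ring
  have hgradDot : ∑ i, pd a x i * pd b x i = 0 := hconf.gradDot_eq_zero.eq_of_nhds
  have hgradSq : ∑ i, pd b x i ^ 2 = ∑ i, pd a x i ^ 2 := hconf.gradSq_eq.eq_of_nhds
  rw [lap_eq_sum_pd] at hlap_a hlap_b
  simp only [lap_eq_sum_pd, hpd_pd, Finset.sum_sub_distrib, ← Finset.sum_div, ← Finset.mul_sum,
    Finset.sum_add_distrib, hlap_a, hlap_b, hgradDot, hgradSq]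
  ring

lemma gradSq_polarAngle (ha : DifferentiableAt ℝ a x) (hb : DifferentiableAt ℝ b x) (hx : a x ≠ 0)
    (hgradSq : gradSq b x = gradSq a x) (hgradDot : gradDot a b x = 0) :
    gradSq (polarAngle a b) x = gradSq a x / (a x ^ 2 + b x ^ 2) := by
  have hr : a x ^ 2 + b x ^ 2 ≠ 0 := by positivity
  rw [gradSq_eq_gradDot] at hgradSq
  rw [gradSq_eq_gradDot, gradDot_polarAngle_left ha hb hx, gradDot_comm b, gradDot_comm a,
    gradDot_polarAngle_left ha hb hx, gradDot_polarAngle_left ha hb hx, gradDot_comm b a, hgradDot,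
    hgradSq, gradSq_eq_gradDot]
  field_simp
  ring

lemma gradDot_polarAngle_normSq (ha : DifferentiableAt ℝ a x) (hb : DifferentiableAt ℝ b x)
    (hx : a x ≠ 0) (hgradSq : gradSq b x = gradSq a x) (hgradDot : gradDot a b x = 0) :
    gradDot (polarAngle a b) (fun y => a y ^ 2 + b y ^ 2) x = 0 := by
  rw [gradSq_eq_gradDot, gradSq_eq_gradDot] at hgradSq
  rw [gradDot_add_right (ha.fun_pow 2) (hb.fun_pow 2), gradDot_sq_right ha, gradDot_sq_right hb,
    gradDot_polarAngle_left ha hb hx, gradDot_polarAngle_left ha hb hx, gradDot_comm b a, hgradDot,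
    hgradSq]
  ring

lemma infLap_polarAngle (ha : ContDiffAt ℝ 2 a x) (hb : ContDiffAt ℝ 2 b x) (hx : a x ≠ 0)
    (hconf : IsHorizontallyConformalAt a b x) (hstat : gradDot (polarAngle a b) (gradSq a) x = 0) :
    infLap (polarAngle a b) x = 0 := by
  have hda := ha.differentiableAt two_ne_zero
  have hdb := hb.differentiableAt two_ne_zero
  have hr : a x ^ 2 + b x ^ 2 ≠ 0 := by positivity
  have hgradSq : gradSq (polarAngle a b) =ᶠ[𝓝 x] fun y => gradSq a y / (a y ^ 2 + b y ^ 2) := by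
    filter_upwards [eventually_differentiableAt_and_ne_zero (ha.of_le one_le_two)
      (hb.of_le one_le_two) hx, hconf.gradSq_eq, hconf.gradDot_eq_zero]
      with y ⟨hya, hyb, hy⟩ hsq hdot
    exact gradSq_polarAngle hya hyb hy hsq hdot
  rw [infLap_eq_half_gradDot_gradSq (contDiffAt_polarAngle ha hb hx), gradDot_congr_right hgradSq,
    gradDot_div_right (differentiableAt_gradSq ha) ((hda.fun_pow 2).fun_add (hdb.fun_pow 2)) hr,
    hstat, gradDot_polarAngle_normSq hda hdb hx hconf.gradSq_eq.eq_of_nhds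
      hconf.gradDot_eq_zero.eq_of_nhds]
  simp

end Angle

section Coordinates

variable {i j : ι} {z : EuclideanSpace ℝ ι}

lemma lap_coord (i : ι) (z : EuclideanSpace ℝ ι) : lap (fun y => y i) z = 0 := by
  simp [lap_eq_sum_pd, pd_coord, pd_const]

lemma gradSq_coord (i : ι) : gradSq (fun y : EuclideanSpace ℝ ι => y i) = fun _ => 1 := by
  funext z
  simp [gradSq, pd_coord]

lemma isHorizontallyConformalAt_coord (hij : i ≠ j) (z : EuclideanSpace ℝ ι) :
    IsHorizontallyConformalAt (fun y => y i) (fun y => y j) z where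
  gradSq_eq := by rw [gradSq_coord, gradSq_coord]
  gradDot_eq_zero := .of_forall fun y => by
    simp [gradDot_coord_right, pd_coord, hij]

lemma lap_polarAngle_coord (hij : i ≠ j) (hz : z i ≠ 0) :
    lap (polarAngle (fun y => y i) fun y => y j) z = 0 :=
  lap_polarAngle (by fun_prop) (by fun_prop) hz (isHorizontallyConformalAt_coord hij z)
    (lap_coord i z) (lap_coord j z)

lemma infLap_polarAngle_coord (hij : i ≠ j) (hz : z i ≠ 0) :
    infLap (polarAngle (fun y => y i) fun y => y j) z = 0 :=
  infLap_polarAngle (by fun_prop) (by fun_prop) hz (isHorizontallyConformalAt_coord hij z)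
    (by simp [gradSq_coord, gradDot, pd_const])

end Coordinates

section Quadric

/-- The real part `Σ (xₖ² - yₖ²)` of `Σ (xₖ + iyₖ)²`, where `xₖ` and `yₖ` are the coordinates with
indices `p k` and `q k`. -/
def quadRe {m : Type*} [Fintype m] (p q : m → ι) (z : EuclideanSpace ℝ ι) : ℝ :=
  ∑ k, (z (p k) ^ 2 - z (q k) ^ 2)

/-- The imaginary part `2 Σ xₖyₖ` of `Σ (xₖ + iyₖ)²`, where `xₖ` and `yₖ` are the coordinates with
indices `p k` and `q k`. -/
def quadIm {m : Type*} [Fintype m] (p q : m → ι) (z : EuclideanSpace ℝ ι) : ℝ :=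
  2 * ∑ k, z (p k) * z (q k)

variable {m : Type*} [Fintype m] {p q : m → ι}

omit [DecidableEq ι] in
lemma contDiff_quadRe (p q : m → ι) : ContDiff ℝ 2 (quadRe p q) := by
  unfold quadRe
  fun_prop

omit [DecidableEq ι] in
lemma contDiff_quadIm (p q : m → ι) : ContDiff ℝ 2 (quadIm p q) := by
  unfold quadIm
  fun_prop

lemma pd_quadRe (p q : m → ι) (z : EuclideanSpace ℝ ι) (i : ι) :
    pd (quadRe p q) z i
      = ∑ k, ((if p k = i then 2 else 0) * z (p k) - (if q k = i then 2 else 0) * z (q k)) := by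
  unfold quadRe
  rw [pd_sum fun k => by fun_prop]
  refine Finset.sum_congr rfl fun k _ => ?_
  rw [pd_sub (by fun_prop) (by fun_prop), pd_sq (by fun_prop), pd_sq (by fun_prop), pd_coord,
    pd_coord]
  simp only [mul_ite, ite_mul, mul_one, mul_zero, zero_mul]

lemma pd_quadIm (p q : m → ι) (z : EuclideanSpace ℝ ι) (i : ι) :
    pd (quadIm p q) z i
      = ∑ k, ((if q k = i then 2 else 0) * z (p k) + (if p k = i then 2 else 0) * z (q k)) := by
  unfold quadIm
  rw [pd_const_mul, pd_sum fun k => by fun_prop, Finset.mul_sum]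
  refine Finset.sum_congr rfl fun k _ => ?_
  rw [pd_mul (by fun_prop) (by fun_prop), pd_coord, pd_coord, mul_add]
  simp only [mul_ite, ite_mul, mul_one, mul_zero, zero_mul]

lemma lap_quadRe (p q : m → ι) (z : EuclideanSpace ℝ ι) : lap (quadRe p q) z = 0 := by
  have hpd_pd (i : ι) : pd (fun y => pd (quadRe p q) y i) z i
      = ∑ k, ((if p k = i then 2 else 0) - if q k = i then 2 else 0) := by
    simp only [pd_quadRe]
    rw [pd_sum fun k => by fun_prop]
    refine Finset.sum_congr rfl fun k _ => ?_
    rw [pd_sub (by fun_prop) (by fun_prop), pd_const_mul, pd_const_mul, pd_coord, pd_coord]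
    simp only [mul_ite, mul_one, mul_zero, ← ite_and, and_self]
  simp only [lap_eq_sum_pd, hpd_pd]
  rw [Finset.sum_comm]
  simp

lemma lap_quadIm (hpq : ∀ k l, p k ≠ q l) (z : EuclideanSpace ℝ ι) :
    lap (quadIm p q) z = 0 := by
  refine Finset.sum_eq_zero fun i _ => ?_
  change pd (fun y => pd (quadIm p q) y i) z i = 0
  simp only [pd_quadIm]
  rw [pd_sum fun k => by fun_prop]
  refine Finset.sum_eq_zero fun k _ => ?_
  rw [pd_add (by fun_prop) (by fun_prop), pd_const_mul, pd_const_mul, pd_coord, pd_coord]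
  by_cases hp : p k = i
  · simp [hp, ((hpq k k).symm.trans_eq hp)]
  · simp [hp]

lemma gradDot_quadRe_left (p q : m → ι) (H : EuclideanSpace ℝ ι → ℝ) (z : EuclideanSpace ℝ ι) :
    gradDot (quadRe p q) H z
      = ∑ k, (2 * z (p k) * pd H z (p k) - 2 * z (q k) * pd H z (q k)) := by
  simp only [gradDot, pd_quadRe, Finset.sum_mul]
  rw [Finset.sum_comm]
  simp [sub_mul, Finset.sum_sub_distrib]

lemma gradDot_quadIm_left (p q : m → ι) (H : EuclideanSpace ℝ ι → ℝ) (z : EuclideanSpace ℝ ι) :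
    gradDot (quadIm p q) H z
      = ∑ k, (2 * z (p k) * pd H z (q k) + 2 * z (q k) * pd H z (p k)) := by
  simp only [gradDot, pd_quadIm, Finset.sum_mul]
  rw [Finset.sum_comm]
  simp [add_mul, Finset.sum_add_distrib]

lemma sum_ite_eq_mul_of_injective {R β : Type*} [NonUnitalNonAssocSemiring R] [DecidableEq β]
    {f : m → β} (hf : Function.Injective f) (c : R) (g : m → R) (l : m) :
    ∑ k, (if f k = f l then c else 0) * g k = c * g l := by
  classical simp [hf.eq_iff]

section Injective

variable (hp : Function.Injective p) (hq : Function.Injective q) (hpq : ∀ k l, p k ≠ q l)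

include hp hpq in
lemma pd_quadRe_left (z : EuclideanSpace ℝ ι) (l : m) : pd (quadRe p q) z (p l) = 2 * z (p l) := by
  simp [pd_quadRe, -ite_mul, sum_ite_eq_mul_of_injective hp, (hpq l _).symm]

include hq hpq in
lemma pd_quadRe_right (z : EuclideanSpace ℝ ι) (l : m) :
    pd (quadRe p q) z (q l) = -(2 * z (q l)) := by
  simp [pd_quadRe, -ite_mul, sum_ite_eq_mul_of_injective hq, hpq _ l]

include hp hpq in
lemma pd_quadIm_left (z : EuclideanSpace ℝ ι) (l : m) : pd (quadIm p q) z (p l) = 2 * z (q l) := by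
  simp [pd_quadIm, -ite_mul, sum_ite_eq_mul_of_injective hp, (hpq l _).symm]

include hq hpq in
lemma pd_quadIm_right (z : EuclideanSpace ℝ ι) (l : m) : pd (quadIm p q) z (q l) = 2 * z (p l) := by
  simp [pd_quadIm, -ite_mul, sum_ite_eq_mul_of_injective hq, hpq _ l]

include hp hq hpq

lemma gradSq_quadRe : gradSq (quadRe p q) = fun z => 4 * ∑ k, (z (p k) ^ 2 + z (q k) ^ 2) := by
  funext z
  rw [gradSq_eq_gradDot, gradDot_quadRe_left, Finset.mul_sum]
  simp only [pd_quadRe_left hp hpq, pd_quadRe_right hq hpq]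
  exact Finset.sum_congr rfl fun k _ => by ring

lemma isHorizontallyConformalAt_quad (z : EuclideanSpace ℝ ι) :
    IsHorizontallyConformalAt (quadRe p q) (quadIm p q) z where
  gradSq_eq := .of_forall fun y => by
    rw [congrFun (gradSq_quadRe hp hq hpq) y, gradSq_eq_gradDot, gradDot_quadIm_left,
      Finset.mul_sum]
    simp only [pd_quadIm_left hp hpq, pd_quadIm_right hq hpq]
    exact Finset.sum_congr rfl fun k _ => by ring
  gradDot_eq_zero := .of_forall fun y => by
    rw [gradDot_quadRe_left]
    simp only [pd_quadIm_left hp hpq, pd_quadIm_right hq hpq]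
    exact Finset.sum_eq_zero fun k _ => by ring

lemma gradDot_gradSq_quadRe (F : EuclideanSpace ℝ ι → ℝ) (z : EuclideanSpace ℝ ι) :
    gradDot F (gradSq (quadRe p q)) z
      = 8 * ∑ k, (z (p k) * pd F z (p k) + z (q k) * pd F z (q k)) := by
  rw [gradSq_quadRe hp hq hpq, gradDot_const_mul_right, gradDot_sum_right F fun k => by fun_prop,
    Finset.mul_sum, Finset.mul_sum]
  refine Finset.sum_congr rfl fun k _ => ?_
  rw [gradDot_add_right (by fun_prop) (by fun_prop), gradDot_sq_right (by fun_prop),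
    gradDot_sq_right (by fun_prop), gradDot_coord_right, gradDot_coord_right]
  ring

lemma gradDot_quadRe_gradSq_quadRe (z : EuclideanSpace ℝ ι) :
    gradDot (quadRe p q) (gradSq (quadRe p q)) z = 16 * quadRe p q z := by
  rw [gradDot_gradSq_quadRe hp hq hpq, quadRe, Finset.mul_sum, Finset.mul_sum]
  simp only [pd_quadRe_left hp hpq, pd_quadRe_right hq hpq]
  exact Finset.sum_congr rfl fun k _ => by ring

lemma gradDot_quadIm_gradSq_quadRe (z : EuclideanSpace ℝ ι) :
    gradDot (quadIm p q) (gradSq (quadRe p q)) z = 16 * quadIm p q z := by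
  rw [gradDot_gradSq_quadRe hp hq hpq, quadIm, Finset.mul_sum, Finset.mul_sum, Finset.mul_sum]
  simp only [pd_quadIm_left hp hpq, pd_quadIm_right hq hpq]
  exact Finset.sum_congr rfl fun k _ => by ring

lemma lap_polarAngle_quad {z : EuclideanSpace ℝ ι} (hz : quadRe p q z ≠ 0) :
    lap (polarAngle (quadRe p q) (quadIm p q)) z = 0 :=
  lap_polarAngle (contDiff_quadRe p q).contDiffAt (contDiff_quadIm p q).contDiffAt hz
    (isHorizontallyConformalAt_quad hp hq hpq z) (lap_quadRe p q z) (lap_quadIm hpq z)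

lemma infLap_polarAngle_quad {z : EuclideanSpace ℝ ι} (hz : quadRe p q z ≠ 0) :
    infLap (polarAngle (quadRe p q) (quadIm p q)) z = 0 := by
  have hRe := (contDiff_quadRe p q).contDiffAt (x := z)
  have hIm := (contDiff_quadIm p q).contDiffAt (x := z)
  refine infLap_polarAngle hRe hIm hz (isHorizontallyConformalAt_quad hp hq hpq z) ?_
  rw [gradDot_polarAngle_left (hRe.differentiableAt two_ne_zero)
    (hIm.differentiableAt two_ne_zero) hz, gradDot_quadRe_gradSq_quadRe hp hq hpq,
    gradDot_quadIm_gradSq_quadRe hp hq hpq]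
  ring

end Injective

end Quadric

section Helicoid

variable {m κ : Type*} [Fintype m] [Fintype κ]

/-- The `s`-th summand of the height `μ₀ arg √(Σ ζₖ²) + Σ μₖ arg ωₖ` in terms of the coordinates
`ζ : m → ℂ` and `ω : κ → ℂ`, where `none` indexes the quadric term. The index types `m ⊕ m` and
`κ ⊕ κ` list the real parts of `ζ` and `ω` before the imaginary parts. -/
def helicoidTerm (μ₀ : ℝ) (μ : κ → ℝ) :
    Option κ → EuclideanSpace ℝ ((m ⊕ m) ⊕ (κ ⊕ κ)) → ℝ
  | none => fun z => μ₀ / 2 *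
      polarAngle (quadRe (Sum.inl ∘ Sum.inl) (Sum.inl ∘ Sum.inr))
        (quadIm (Sum.inl ∘ Sum.inl) (Sum.inl ∘ Sum.inr)) z
  | some k => fun z => μ k *
      polarAngle (fun y => y (Sum.inr (Sum.inl k))) (fun y => y (Sum.inr (Sum.inr k))) z

/-- The height function `μ₀ arg √(Σ ζₖ²) + Σ μₖ arg ωₖ` in any dimension, up to a locally constant
term. -/
def superposedHelicoid (μ₀ : ℝ) (μ : κ → ℝ) (z : EuclideanSpace ℝ ((m ⊕ m) ⊕ (κ ⊕ κ))) : ℝ :=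
  ∑ s, helicoidTerm μ₀ μ s z

/-- The summand of `superposedHelicoid` in which a real coordinate occurs. -/
def coordTerm : (m ⊕ m) ⊕ (κ ⊕ κ) → Option κ :=
  Sum.elim (fun _ => none) (Sum.elim some some)

omit [Fintype κ] in
lemma dependsOn_helicoidTerm (μ₀ : ℝ) (μ : κ → ℝ) (s : Option κ) :
    DependsOn (helicoidTerm (m := m) μ₀ μ s ∘ WithLp.toLp 2) (coordTerm ⁻¹' {s}) := by
  intro u v huv
  cases s with
  | none =>
    have hx (k : m) : u (Sum.inl (Sum.inl k)) = v (Sum.inl (Sum.inl k)) := huv _ rfl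
    have hy (k : m) : u (Sum.inl (Sum.inr k)) = v (Sum.inl (Sum.inr k)) := huv _ rfl
    simp [helicoidTerm, polarAngle, quadRe, quadIm, hx, hy]
  | some k =>
    have hx : u (Sum.inr (Sum.inl k)) = v (Sum.inr (Sum.inl k)) := huv _ rfl
    have hy : u (Sum.inr (Sum.inr k)) = v (Sum.inr (Sum.inr k)) := huv _ rfl
    simp [helicoidTerm, polarAngle, hx, hy]

variable [DecidableEq m] [DecidableEq κ] {z : EuclideanSpace ℝ ((m ⊕ m) ⊕ (κ ⊕ κ))}
  (hquad : ∑ k : m, (z (Sum.inl (Sum.inl k)) ^ 2 - z (Sum.inl (Sum.inr k)) ^ 2) ≠ 0)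
  (hcoord : ∀ k : κ, z (Sum.inr (Sum.inl k)) ≠ 0)

include hquad hcoord

omit [DecidableEq m] [DecidableEq κ] in
lemma contDiffAt_helicoidTerm (μ₀ : ℝ) (μ : κ → ℝ) (s : Option κ) :
    ContDiffAt ℝ 2 (helicoidTerm μ₀ μ s) z := by
  cases s with
  | none =>
    exact contDiffAt_const.mul (contDiffAt_polarAngle (contDiff_quadRe _ _).contDiffAt
      (contDiff_quadIm _ _).contDiffAt hquad)
  | some k =>
    exact contDiffAt_const.mul (contDiffAt_polarAngle (by fun_prop) (by fun_prop) (hcoord k))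

lemma lap_helicoidTerm (μ₀ : ℝ) (μ : κ → ℝ) (s : Option κ) : lap (helicoidTerm μ₀ μ s) z = 0 := by
  cases s with
  | none =>
    rw [helicoidTerm, lap_const_mul, lap_polarAngle_quad (Sum.inl_injective.comp Sum.inl_injective)
      (Sum.inl_injective.comp Sum.inr_injective) (by simp) hquad, mul_zero]
  | some k => rw [helicoidTerm, lap_const_mul, lap_polarAngle_coord (by simp) (hcoord k), mul_zero]

lemma infLap_helicoidTerm (μ₀ : ℝ) (μ : κ → ℝ) (s : Option κ) :
    infLap (helicoidTerm μ₀ μ s) z = 0 := by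
  cases s with
  | none =>
    rw [helicoidTerm, infLap_const_mul,
      infLap_polarAngle_quad (Sum.inl_injective.comp Sum.inl_injective)
        (Sum.inl_injective.comp Sum.inr_injective) (by simp) hquad, mul_zero]
  | some k =>
    rw [helicoidTerm, infLap_const_mul, infLap_polarAngle_coord (by simp) (hcoord k), mul_zero]

end Helicoid

lemma F12_eq_superposedHelicoid (μA μB μC : ℝ) :
    F12 μA μB μC = superposedHelicoid μA ![μB, μC] := by
  funext z
  simp [F12, superposedHelicoid, helicoidTerm, polarAngle, quadRe, quadIm, Fintype.sum_option,
    add_assoc]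

theorem superposed_helicoid_minimal_general {m κ : Type*} [Fintype m] [DecidableEq m] [Fintype κ]
    [DecidableEq κ] (μ₀ : ℝ) (μ : κ → ℝ) (z : EuclideanSpace ℝ ((m ⊕ m) ⊕ (κ ⊕ κ)))
    (hquad : ∑ k : m, (z (Sum.inl (Sum.inl k)) ^ 2 - z (Sum.inl (Sum.inr k)) ^ 2) ≠ 0)
    (hcoord : ∀ k : κ, z (Sum.inr (Sum.inl k)) ≠ 0) :
    lap (superposedHelicoid μ₀ μ) z = 0 ∧ infLap (superposedHelicoid μ₀ μ) z = 0 ∧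
    (1 + gradSq (superposedHelicoid μ₀ μ) z) * lap (superposedHelicoid μ₀ μ) z
      - infLap (superposedHelicoid μ₀ μ) z = 0 := by
  have hsmooth := contDiffAt_helicoidTerm hquad hcoord μ₀ μ
  have hlap : lap (superposedHelicoid μ₀ μ) z = 0 :=
    (lap_sum hsmooth).trans (Finset.sum_eq_zero fun s _ => lap_helicoidTerm hquad hcoord μ₀ μ s)
  have hinfLap : infLap (superposedHelicoid μ₀ μ) z = 0 :=
    (infLap_sum_of_pairwise_disjoint hsmooth (dependsOn_helicoidTerm μ₀ μ)
      (pairwise_disjoint_fiber coordTerm)).trans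
      (Finset.sum_eq_zero fun s _ => infLap_helicoidTerm hquad hcoord μ₀ μ s)
  exact ⟨hlap, hinfLap, by rw [hlap, hinfLap, mul_zero, sub_zero]⟩

/-- `F = μ_A·arg(√(ζ₁²+⋯+ζ₄²)) + μ_B·arg(ζ₅) + μ_C·arg(ζ₆)` is harmonic
and infinity-harmonic on the open set where `(x₁²+⋯+x₄²) − (y₁²+⋯+y₄²) ≠ 0`, `x₅ ≠ 0`,
`x₆ ≠ 0`, and satisfies the minimal hypersurface equation, so its (multi-valued) graph
`z = F` is minimal in `ℝ¹³`. -/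
theorem superposed_helicoid_minimal (μA μB μC : ℝ)
    (z : EuclideanSpace ℝ ((Fin 4 ⊕ Fin 4) ⊕ (Fin 2 ⊕ Fin 2)))
    (h1 : (∑ k : Fin 4, ((z (Sum.inl (Sum.inl k))) ^ 2 - (z (Sum.inl (Sum.inr k))) ^ 2)) ≠ 0)
    (h5 : z (Sum.inr (Sum.inl 0)) ≠ 0) (h6 : z (Sum.inr (Sum.inl 1)) ≠ 0) :
    lap (F12 μA μB μC) z = 0 ∧ infLap (F12 μA μB μC) z = 0 ∧
    (1 + gradSq (F12 μA μB μC) z) * lap (F12 μA μB μC) z - infLap (F12 μA μB μC) z = 0 := by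
  rw [F12_eq_superposedHelicoid]
  exact superposed_helicoid_minimal_general μA ![μB, μC] z h1 (Fin.forall_fin_two.2 ⟨h5, h6⟩)
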